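/- arXiv:0909.2264 — 2 statements merged into one kernel-verified Lean document; each statement's English description precedes it below -/
import Mathlib

section
/- Let M be a finite matroid of rank r on ground set E. For all commuting variables x and ξ (equivalently, for all elements of any commutative ring), R(M; x, ξ) = ∑_{T ⊆ E} R(M|T; x, −1) · R(M/T; −1, ξ), where the sum ranges over all subsets T of E. -/
open Finset

/-- A finite matroid on ground set `E`, given by its rank function on finsets,
satisfying the standard rank axioms: the rank of a set is at most its cardinality,
rank is monotone, and rank is submodular. -/
structure FinMatroid (α : Type*) [DecidableEq α] where
  E : Finset α
  rk : Finset α → ℕ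
  rk_le_card : ∀ A ⊆ E, rk A ≤ A.card
  rk_mono : ∀ ⦃A B : Finset α⦄, A ⊆ B → B ⊆ E → rk A ≤ rk B
  rk_submod : ∀ ⦃A B : Finset α⦄, A ⊆ E → B ⊆ E →
    rk (A ∪ B) + rk (A ∩ B) ≤ rk A + rk B

/-- The nullity-corank (rank generating) polynomial of the matroid-like data given by
ground set `G`, rank function `f`, and normalizing rank `s`:
`R = ∑_{A ⊆ G} x ^ (|A| - f A) * l ^ (s - f A)`. -/
def RG {α R : Type*} [DecidableEq α] [CommRing R] (G : Finset α) (f : Finset α → ℕ)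
    (s : ℕ) (x l : R) : R :=
  ∑ A ∈ G.powerset, x ^ (A.card - f A) * l ^ (s - f A)

/-!
Up to signs depending on `T` alone, `R(M|T; x, -1)` and `R(M/T; -1, ξ)` are sums `∑_{A ⊆ T} g A`
and `∑_{T ⊆ B ⊆ E} h B` over the lower and the upper interval of `T` in the Boolean lattice, where
`g A = ± x ^ (|A| - rk A)` and `h B = ± ξ ^ (r - rk B)` do not involve `T`. In the product the
signs `(-1) ^ rk T` cancel and `(-1) ^ |T|` remains, so by Möbius inversion the sum over `T`
collapses to the diagonal `∑_A (-1) ^ |A| * g A * h A`.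
-/

section BooleanLattice

variable {α : Type*} [DecidableEq α]

lemma sum_Icc_eq_sum_powerset_sdiff {N : Type*} [AddCommMonoid N] {s t : Finset α} (h : s ⊆ t)
    (g : Finset α → N) :
    ∑ u ∈ Icc s t, g u = ∑ v ∈ (t \ s).powerset, g (v ∪ s) := by
  simp_rw [Icc_eq_image_powerset h, union_comm _ s]
  refine sum_image fun u hu v hv huv ↦ ?_
  have disjoint_of_mem {w} (hw : w ∈ (t \ s).powerset) : Disjoint w s :=
    disjoint_of_subset_left (mem_powerset.1 hw) sdiff_disjoint
  rw [← union_sdiff_cancel_left (disjoint_of_mem hu).symm, huv,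
    union_sdiff_cancel_left (disjoint_of_mem hv).symm]

variable {R : Type*} [Ring R]

lemma sum_Icc_neg_one_pow_card (s t : Finset α) :
    ∑ u ∈ Icc s t, (-1 : R) ^ #u = if s = t then (-1) ^ #t else 0 := by
  by_cases h : s ⊆ t
  · have card_eq : ∀ v ∈ (t \ s).powerset, (-1 : R) ^ #(v ∪ s) = (-1) ^ #v * (-1) ^ #s := by
      intro v hv
      rw [card_union_of_disjoint (disjoint_of_subset_left (mem_powerset.1 hv) sdiff_disjoint),
        pow_add]
    have alternating : ∑ v ∈ (t \ s).powerset, (-1 : R) ^ #v = if t \ s = ∅ then 1 else 0 :=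
      mod_cast congrArg (Int.cast : ℤ → R) (sum_powerset_neg_one_pow_card (x := t \ s))
    rw [sum_Icc_eq_sum_powerset_sdiff h, sum_congr rfl card_eq, ← sum_mul, alternating]
    obtain rfl | hne := eq_or_ne s t
    · simp
    · rw [if_neg fun h' ↦ hne (h.antisymm (sdiff_eq_empty_iff_subset.1 h')), if_neg hne, zero_mul]
  · rw [Icc_eq_empty h, sum_empty, if_neg fun h' ↦ h h'.subset]

lemma sum_neg_one_pow_card_mul_sum_powerset_mul_sum_Icc (E : Finset α) (g h : Finset α → R) :
    ∑ T ∈ E.powerset, (-1) ^ #T * (∑ A ∈ T.powerset, g A) * ∑ B ∈ Icc T E, h B =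
      ∑ A ∈ E.powerset, (-1) ^ #A * g A * h A := by
  calc
    _ = ∑ T ∈ E.powerset, ∑ A ∈ T.powerset, ∑ B ∈ Icc T E, (-1) ^ #T * g A * h B := by
      simp_rw [mul_assoc, sum_mul_sum, mul_sum]
    _ = ∑ A ∈ E.powerset, ∑ T ∈ Icc A E, ∑ B ∈ Icc T E, (-1) ^ #T * g A * h B :=
      sum_comm' fun T A ↦ by simp only [mem_powerset, mem_Icc]; grind
    _ = ∑ A ∈ E.powerset, ∑ B ∈ Icc A E, ∑ T ∈ Icc A B, (-1) ^ #T * g A * h B :=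
      sum_congr rfl fun A _ ↦ sum_comm' fun T B ↦ by simp only [mem_Icc]; grind
    _ = ∑ A ∈ E.powerset, ∑ B ∈ Icc A E, if A = B then (-1) ^ #B * g A * h B else 0 := by
      simp_rw [← sum_mul, sum_Icc_neg_one_pow_card, ite_mul, zero_mul]
    _ = ∑ A ∈ E.powerset, (-1) ^ #A * g A * h A := by
      refine sum_congr rfl fun A hA ↦ ?_
      rw [sum_ite_eq, if_pos (left_mem_Icc.2 (mem_powerset.1 hA))]

end BooleanLattice

/-- The set function `f` is the rank function of a demimatroid on `E` (Britz, Johnsen, Mayhew,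
Shiromoto): the rank `f A` and the nullity `|A| - f A` are both monotone. Since `f A ≤ |A|`, the
nullity is not affected by the truncation of natural subtraction. -/
structure IsDemimatroid {α : Type*} (E : Finset α) (f : Finset α → ℕ) : Prop where
  le_card : ∀ ⦃A⦄, A ⊆ E → f A ≤ #A
  mono : ∀ ⦃A B⦄, A ⊆ B → B ⊆ E → f A ≤ f B
  nullity_mono : ∀ ⦃A B⦄, A ⊆ B → B ⊆ E → #A - f A ≤ #B - f B

section Demimatroid

variable {α : Type*} [DecidableEq α] {E : Finset α} {f : Finset α → ℕ}

lemma FinMatroid.isDemimatroid (M : FinMatroid α) : IsDemimatroid M.E M.rk where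
  le_card := M.rk_le_card
  mono := M.rk_mono
  nullity_mono A B hAB hBE := by
    have hdiff : B \ A ⊆ M.E := sdiff_subset.trans hBE
    have hrk : M.rk B ≤ M.rk A + M.rk (B \ A) := by
      simpa only [union_sdiff_of_subset hAB] using
        (Nat.le_add_right _ _).trans (M.rk_submod (hAB.trans hBE) hdiff)
    have hcard := card_sdiff_add_card_eq_card hAB
    have hle := M.rk_le_card _ hdiff
    omega

lemma IsDemimatroid.union_le_add_card (hf : IsDemimatroid E f) {S T : Finset α}
    (hE : S ∪ T ⊆ E) : f (S ∪ T) ≤ f T + #S := by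
  have hnullity := hf.nullity_mono subset_union_right hE
  have hle := hf.le_card hE
  have hcard := card_union_le S T
  omega

variable {R : Type*} [CommRing R]

lemma RG_neg_one_right {G : Finset α} {s : ℕ} (h : ∀ A ⊆ G, f A ≤ s) (x : R) :
    RG G f s x (-1) = (-1) ^ s * ∑ A ∈ G.powerset, (-1) ^ f A * x ^ (#A - f A) := by
  rw [RG, mul_sum]
  refine sum_congr rfl fun A hA ↦ ?_
  have hA := h A (mem_powerset.1 hA)
  have sign : (-1 : R) ^ (s - f A) = (-1) ^ (s + f A) :=
    neg_one_pow_congr (by simp only [Nat.even_iff]; omega)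
  rw [sign, pow_add]
  ring

lemma IsDemimatroid.RG_contract_neg_one_left (hf : IsDemimatroid E f) {T : Finset α}
    (hT : T ⊆ E) (ξ : R) :
    RG (E \ T) (fun A ↦ f (A ∪ T) - f T) (f E - f T) (-1) ξ =
      (-1) ^ (#T + f T) * ∑ B ∈ Icc T E, (-1) ^ (#B + f B) * ξ ^ (f E - f B) := by
  rw [RG, sum_Icc_eq_sum_powerset_sdiff hT, mul_sum]
  refine sum_congr rfl fun S hS ↦ ?_
  have hS := mem_powerset.1 hS
  have hdisj : Disjoint S T := disjoint_of_subset_left hS sdiff_disjoint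
  have hE : S ∪ T ⊆ E := union_subset (hS.trans sdiff_subset) hT
  have hmono := hf.mono (subset_union_right (s₁ := S)) hE
  have hle := hf.union_le_add_card hE
  have hcard := card_union_of_disjoint hdisj
  have sign : (-1 : R) ^ (#S - (f (S ∪ T) - f T)) =
      (-1) ^ (#T + f T + (#(S ∪ T) + f (S ∪ T))) :=
    neg_one_pow_congr (by simp only [Nat.even_iff]; omega)
  rw [sign, Nat.sub_sub_sub_cancel_right hmono, pow_add, mul_assoc]

theorem rank_generating_KRSEV_general (hf : IsDemimatroid E f) (x ξ : R) :
    RG E f (f E) x ξ =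
      ∑ T ∈ E.powerset,
        RG T f (f T) x (-1) * RG (E \ T) (fun A ↦ f (A ∪ T) - f T) (f E - f T) (-1) ξ := by
  have sign_sq (n : ℕ) : (-1 : R) ^ n * (-1) ^ n = 1 := by rw [← mul_pow]; simp
  let g A := (-1) ^ f A * x ^ (#A - f A)
  let h B := (-1) ^ (#B + f B) * ξ ^ (f E - f B)
  symm
  calc
    _ = ∑ T ∈ E.powerset, (-1) ^ #T * (∑ A ∈ T.powerset, g A) * ∑ B ∈ Icc T E, h B := by
      refine sum_congr rfl fun T hT ↦ ?_
      have hT := mem_powerset.1 hT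
      rw [RG_neg_one_right (fun A hA ↦ hf.mono hA hT), hf.RG_contract_neg_one_left hT, pow_add]
      linear_combination
        (-1) ^ #T * (∑ A ∈ T.powerset, g A) * (∑ B ∈ Icc T E, h B) * sign_sq (f T)
    _ = ∑ A ∈ E.powerset, (-1) ^ #A * g A * h A :=
      sum_neg_one_pow_card_mul_sum_powerset_mul_sum_Icc E g h
    _ = RG E f (f E) x ξ := by
      refine sum_congr rfl fun A _ ↦ ?_
      linear_combination x ^ (#A - f A) * ξ ^ (f E - f A) * sign_sq (#A + f A)

end Demimatroid

/-- The convolution identity of Kook–Reiner–Stanton and Étienne–Las Vergnas for the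
rank generating polynomial. -/
theorem rank_generating_KRSEV {α R : Type*} [DecidableEq α] [CommRing R]
    (M : FinMatroid α) (x ξ : R) :
    RG M.E M.rk (M.rk M.E) x ξ =
      ∑ T ∈ M.E.powerset,
        RG T M.rk (M.rk T) x (-1) *
          RG (M.E \ T) (fun A => M.rk (A ∪ T) - M.rk T) (M.rk M.E - M.rk T) (-1) ξ :=
  rank_generating_KRSEV_general M.isDemimatroid x ξ
end

section
/- Let M be a finite matroid of rank r on ground set E. For all commuting variables x and ξ (equivalently, for all elements of any commutative ring), (−1)^r · R(M; −x, −ξ) = ∑_{X cyclic flat of M} (−1)^{|X|} · χ((M|X)^⊥; x) · χ(M/X; ξ), where the sum ranges over all cyclic flats X of M and (M|X)^⊥ denotes the dual matroid of the restriction M|X. -/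
open Finset

/-- The characteristic polynomial of the matroid-like data given by ground set `G`,
rank function `f`, and rank `s`: `χ = ∑_{A ⊆ G} (-1) ^ |A| * l ^ (s - f A)`. -/
def charPoly {α R : Type*} [DecidableEq α] [CommRing R] (G : Finset α) (f : Finset α → ℕ)
    (s : ℕ) (l : R) : R :=
  ∑ A ∈ G.powerset, (-1 : R) ^ A.card * l ^ (s - f A)

/-!
Reindexing subsets writes `χ((M|X)⊥; x)` as `∑_{C ⊆ X} (-1)^|X \ C| x^(|C| - rk C)` and
`χ(M/X; ξ)` as `∑_{X ⊆ D ⊆ E} (-1)^|D \ X| ξ^(r - rk D)`. Summing over *all* `X ⊆ E`, Möbius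
inversion on the Boolean lattice leaves only the terms with `C = D`, which make up the rank
generating polynomial. The sum may be restricted to cyclic flats because the characteristic
polynomial of a matroid with a loop is zero: `M/X` has a loop unless `X` is a flat, and `(M|X)⊥` has
a loop whenever `M|X` has a coloop.
-/

section BooleanLattice

variable {α R : Type*} [DecidableEq α] [CommRing R]

theorem sum_Icc_eq_sum_powerset_sdiff_s10 {β : Type*} [AddCommMonoid β] {C D : Finset α} (h : C ⊆ D)
    (f : Finset α → β) :
    ∑ X ∈ Icc C D, f X = ∑ A ∈ (D \ C).powerset, f (A ∪ C) := by
  have union_injOn : Set.InjOn (C ∪ ·) ((D \ C).powerset : Set (Finset α)) := by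
    intro A hA B hB hAB
    have hA' : Disjoint C A := disjoint_sdiff.mono_right (mem_powerset.1 hA)
    have hB' : Disjoint C B := disjoint_sdiff.mono_right (mem_powerset.1 hB)
    rw [← union_sdiff_cancel_left hA', ← union_sdiff_cancel_left hB']
    exact congrArg (· \ C) hAB
  rw [Icc_eq_image_powerset h, sum_image union_injOn]
  simp only [union_comm C]

theorem sum_Icc_neg_one_pow_card_sdiff {C D : Finset α} (h : C ⊆ D) :
    ∑ X ∈ Icc C D, (-1 : R) ^ #(D \ X) = if C = D then 1 else 0 := by
  have card_sdiff_union : ∀ A ∈ (D \ C).powerset, #(D \ (A ∪ C)) = #(D \ C) - #A := by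
    intro A hA
    rw [union_comm, ← sup_eq_union, ← sdiff_sdiff_left, card_sdiff_of_subset (mem_powerset.1 hA)]
  calc ∑ X ∈ Icc C D, (-1 : R) ^ #(D \ X)
      = ∑ A ∈ (D \ C).powerset, 1 ^ #A * (-1 : R) ^ (#(D \ C) - #A) := by
        rw [sum_Icc_eq_sum_powerset_sdiff_s10 h]
        exact sum_congr rfl fun A hA => by rw [card_sdiff_union A hA, one_pow, one_mul]
    _ = 0 ^ #(D \ C) := by rw [sum_pow_mul_eq_add_pow, add_neg_cancel]
    _ = if C = D then 1 else 0 := by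
        simp only [zero_pow_eq, card_eq_zero, sdiff_eq_empty_iff_subset, h.ge_iff_eq]

theorem moebius_inversion_powerset (f : Finset α → R) (D : Finset α) :
    ∑ X ∈ D.powerset, (-1) ^ #(D \ X) * ∑ C ∈ X.powerset, f C = f D := by
  calc ∑ X ∈ D.powerset, (-1) ^ #(D \ X) * ∑ C ∈ X.powerset, f C
      = ∑ C ∈ D.powerset, ∑ X ∈ Icc C D, (-1) ^ #(D \ X) * f C := by
        simp only [mul_sum]
        refine sum_comm' fun X C => ?_
        simp only [mem_powerset, mem_Icc]
        exact ⟨fun h => ⟨⟨h.2, h.1⟩, h.2.trans h.1⟩, fun h => ⟨h.1.2, h.1.1⟩⟩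
    _ = ∑ C ∈ D.powerset, if C = D then f C else 0 := by
        refine sum_congr rfl fun C hC => ?_
        rw [← sum_mul, sum_Icc_neg_one_pow_card_sdiff (mem_powerset.1 hC), ite_mul, one_mul,
          zero_mul]
    _ = f D := by rw [sum_ite_eq', if_pos (mem_powerset_self D)]

theorem neg_one_pow_card_mul_neg_one_pow_card_sdiff {C X : Finset α} (h : C ⊆ X) :
    (-1 : R) ^ #X * (-1) ^ #(X \ C) = (-1) ^ #C := by
  rw [← card_sdiff_add_card_eq_card h, pow_add, mul_right_comm, ← mul_pow, neg_one_mul, neg_neg,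
    one_pow, one_mul]

theorem sum_powerset_alternating_convolution (p q : Finset α → R) (E : Finset α) :
    ∑ X ∈ E.powerset, (-1) ^ #X * (∑ C ∈ X.powerset, (-1) ^ #(X \ C) * p C) *
        (∑ D ∈ Icc X E, (-1) ^ #(D \ X) * q D) =
      ∑ A ∈ E.powerset, (-1) ^ #A * p A * q A := by
  have absorb_sign (X : Finset α) : (-1) ^ #X * ∑ C ∈ X.powerset, (-1) ^ #(X \ C) * p C =
      ∑ C ∈ X.powerset, (-1) ^ #C * p C := by
    rw [mul_sum]
    refine sum_congr rfl fun C hC => ?_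
    rw [← mul_assoc, neg_one_pow_card_mul_neg_one_pow_card_sdiff (mem_powerset.1 hC)]
  calc _ = ∑ X ∈ E.powerset, ∑ D ∈ Icc X E,
          (-1) ^ #(D \ X) * (∑ C ∈ X.powerset, (-1) ^ #C * p C) * q D := by
        refine sum_congr rfl fun X _ => ?_
        rw [absorb_sign, mul_sum]
        exact sum_congr rfl fun D _ => by ring
    _ = ∑ D ∈ E.powerset, ∑ X ∈ D.powerset,
          (-1) ^ #(D \ X) * (∑ C ∈ X.powerset, (-1) ^ #C * p C) * q D := by
        refine sum_comm' fun X D => ?_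
        simp only [mem_powerset, mem_Icc]
        exact ⟨fun h => h.2, fun h => ⟨h.1.trans h.2, h⟩⟩
    _ = ∑ D ∈ E.powerset, (-1) ^ #D * p D * q D := by
        simp only [← sum_mul, moebius_inversion_powerset]

end BooleanLattice

namespace FinMatroid

variable {α R : Type*} [DecidableEq α] [CommRing R] (M : FinMatroid α) {X : Finset α} {e : α}

theorem rk_union_le {A B : Finset α} (hA : A ⊆ M.E) (hB : B ⊆ M.E) :
    M.rk (A ∪ B) ≤ M.rk A + M.rk B :=
  (Nat.le_add_right _ _).trans (M.rk_submod hA hB)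

theorem rk_le_rk_add_card_sdiff {A B : Finset α} (hAB : A ⊆ B) (hB : B ⊆ M.E) :
    M.rk B ≤ M.rk A + #(B \ A) := by
  have hBA : B \ A ⊆ M.E := sdiff_subset.trans hB
  calc M.rk B = M.rk (A ∪ B \ A) := by rw [union_sdiff_of_subset hAB]
    _ ≤ M.rk A + M.rk (B \ A) := M.rk_union_le (hAB.trans hB) hBA
    _ ≤ M.rk A + #(B \ A) := Nat.add_le_add_left (M.rk_le_card _ hBA) _

theorem rk_ground_le_card_add_rk_sdiff {A : Finset α} (hA : A ⊆ M.E) :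
    M.rk M.E ≤ #A + M.rk (M.E \ A) := by
  have rk_le := M.rk_le_rk_add_card_sdiff (sdiff_subset : M.E \ A ⊆ M.E) Subset.rfl
  rwa [Finset.sdiff_sdiff_eq_self hA, add_comm] at rk_le

theorem rk_insert_of_loop {A : Finset α} (he : e ∈ M.E) (loop : M.rk {e} = 0) (hA : A ⊆ M.E) :
    M.rk (insert e A) = M.rk A := by
  refine le_antisymm ?_ (M.rk_mono (subset_insert e A) (insert_subset he hA))
  calc M.rk ({e} ∪ A) ≤ M.rk {e} + M.rk A := M.rk_union_le (singleton_subset_iff.2 he) hA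
    _ = M.rk A := by rw [loop, zero_add]

/-- The restriction `M|X`, obtained by shrinking the ground set. Its rank function is the same
function on finsets, of which only the values on subsets of `X` matter. -/
def restrict (hX : X ⊆ M.E) : FinMatroid α where
  E := X
  rk := M.rk
  rk_le_card A hA := M.rk_le_card A (hA.trans hX)
  rk_mono _ _ hAB hB := M.rk_mono hAB (hB.trans hX)
  rk_submod _ _ hA hB := M.rk_submod (hA.trans hX) (hB.trans hX)

/-- The contraction `M/X`. The truncated subtraction in its rank function is exact on subsets of
the ground set. -/
def contract (hX : X ⊆ M.E) : FinMatroid α where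
  E := M.E \ X
  rk A := M.rk (A ∪ X) - M.rk X
  rk_le_card A hA := by
    have hA' : A ⊆ M.E := hA.trans sdiff_subset
    have := M.rk_union_le hA' hX
    have := M.rk_le_card A hA'
    omega
  rk_mono A B hAB hB :=
    Nat.sub_le_sub_right (M.rk_mono (union_subset_union_left hAB)
      (union_subset (hB.trans sdiff_subset) hX)) _
  rk_submod A B hA hB := by
    have hAX : A ∪ X ⊆ M.E := union_subset (hA.trans sdiff_subset) hX
    have hBX : B ∪ X ⊆ M.E := union_subset (hB.trans sdiff_subset) hX
    have submod := M.rk_submod hAX hBX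
    rw [← union_union_distrib_right, ← inter_union_distrib_right] at submod
    have := M.rk_mono (subset_union_right : X ⊆ A ∪ B ∪ X)
      (union_union_distrib_right A B X ▸ union_subset hAX hBX)
    have := M.rk_mono (subset_union_right : X ⊆ A ∩ B ∪ X)
      ((union_subset_union_left inter_subset_left).trans hAX)
    omega

/-- The dual matroid `M⊥`. The truncated subtraction in its rank function is exact on subsets of
the ground set. -/
def dual : FinMatroid α where
  E := M.E
  rk A := #A + M.rk (M.E \ A) - M.rk M.E
  rk_le_card A _ := by
    have := M.rk_mono (sdiff_subset : M.E \ A ⊆ M.E) Subset.rfl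
    omega
  rk_mono A B hAB hB := by
    have rk_le := M.rk_le_rk_add_card_sdiff (sdiff_subset_sdiff Subset.rfl hAB) sdiff_subset
    rw [sdiff_sdiff_sdiff_cancel_left hB] at rk_le
    have := card_sdiff_add_card_eq_card hAB
    omega
  rk_submod A B hA hB := by
    have submod := M.rk_submod (sdiff_subset : M.E \ A ⊆ M.E) (sdiff_subset : M.E \ B ⊆ M.E)
    rw [← sdiff_inter_distrib_right, ← sdiff_union_distrib] at submod
    have := card_union_add_card_inter A B
    have := M.rk_ground_le_card_add_rk_sdiff (union_subset hA hB)
    have := M.rk_ground_le_card_add_rk_sdiff (inter_subset_left.trans hA : A ∩ B ⊆ M.E)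
    omega

theorem charPoly_eq_zero_of_loop (he : e ∈ M.E) (loop : M.rk {e} = 0) (s : ℕ) (l : R) :
    charPoly M.E M.rk s l = 0 := by
  rw [charPoly, ← insert_erase he, sum_powerset_insert (notMem_erase e M.E), ← sum_add_distrib]
  refine sum_eq_zero fun A hA => ?_
  have hAe : A ⊆ M.E.erase e := mem_powerset.1 hA
  rw [M.rk_insert_of_loop he loop (hAe.trans (erase_subset e M.E)),
    card_insert_of_notMem fun h => notMem_erase e M.E (hAe h)]
  ring

theorem charPoly_contract_eq_zero_of_rk_insert_le (hX : X ⊆ M.E) (he : e ∈ M.E \ X)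
    (h : M.rk (insert e X) ≤ M.rk X) (s : ℕ) (l : R) :
    charPoly (M.contract hX).E (M.contract hX).rk s l = 0 :=
  (M.contract hX).charPoly_eq_zero_of_loop he (Nat.sub_eq_zero_of_le h) s l

theorem charPoly_dual_eq_zero_of_coloop (he : e ∈ M.E) (coloop : M.rk (M.E.erase e) < M.rk M.E)
    (s : ℕ) (l : R) : charPoly M.dual.E M.dual.rk s l = 0 := by
  refine M.dual.charPoly_eq_zero_of_loop he ?_ s l
  change #{e} + M.rk (M.E \ {e}) - M.rk M.E = 0
  rw [card_singleton, sdiff_singleton_eq_erase]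
  omega

theorem charPoly_dual (l : R) :
    charPoly M.dual.E M.dual.rk (#M.E - M.rk M.E) l =
      ∑ C ∈ M.E.powerset, (-1) ^ #(M.E \ C) * l ^ (#C - M.rk C) := by
  refine sum_nbij' (M.E \ ·) (M.E \ ·) ?_ ?_ ?_ ?_ ?_ <;> intro A hA
  · exact mem_powerset.2 sdiff_subset
  · exact mem_powerset.2 sdiff_subset
  · exact Finset.sdiff_sdiff_eq_self (mem_powerset.1 hA)
  · exact Finset.sdiff_sdiff_eq_self (mem_powerset.1 hA)
  · replace hA : A ⊆ M.E := mem_powerset.1 hA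
    have corank_dual_eq_nullity :
        #M.E - M.rk M.E - (#A + M.rk (M.E \ A) - M.rk M.E) = #(M.E \ A) - M.rk (M.E \ A) := by
      have := M.rk_ground_le_card_add_rk_sdiff hA
      have := card_sdiff_add_card_eq_card hA
      omega
    rw [Finset.sdiff_sdiff_eq_self hA, ← corank_dual_eq_nullity]
    rfl

theorem charPoly_contract (hX : X ⊆ M.E) (l : R) :
    charPoly (M.contract hX).E (M.contract hX).rk (M.rk M.E - M.rk X) l =
      ∑ D ∈ Icc X M.E, (-1) ^ #(D \ X) * l ^ (M.rk M.E - M.rk D) := by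
  rw [sum_Icc_eq_sum_powerset_sdiff_s10 hX]
  refine sum_congr rfl fun A hA => ?_
  replace hA : A ⊆ M.E \ X := mem_powerset.1 hA
  have corank_contract :
      M.rk M.E - M.rk X - (M.rk (A ∪ X) - M.rk X) = M.rk M.E - M.rk (A ∪ X) := by
    have := M.rk_mono (subset_union_right : X ⊆ A ∪ X)
      (union_subset (hA.trans sdiff_subset) hX)
    omega
  rw [union_sdiff_cancel_right (sdiff_disjoint.mono_left hA), ← corank_contract]
  rfl

theorem neg_one_pow_rk_mul_RG_neg (x ξ : R) :
    (-1) ^ M.rk M.E * RG M.E M.rk (M.rk M.E) (-x) (-ξ) =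
      ∑ A ∈ M.E.powerset, (-1) ^ #A * x ^ (#A - M.rk A) * ξ ^ (M.rk M.E - M.rk A) := by
  rw [RG, mul_sum]
  refine sum_congr rfl fun A hA => ?_
  replace hA : A ⊆ M.E := mem_powerset.1 hA
  obtain ⟨nullity, h_nullity⟩ := Nat.exists_eq_add_of_le (M.rk_le_card A hA)
  obtain ⟨corank, h_corank⟩ := Nat.exists_eq_add_of_le (M.rk_mono hA Subset.rfl)
  have sign_sq : (-1 : R) ^ corank * (-1) ^ corank = 1 := by
    rw [← mul_pow, neg_one_mul, neg_neg, one_pow]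
  rw [h_nullity, h_corank, Nat.add_sub_cancel_left, Nat.add_sub_cancel_left, neg_pow x, neg_pow ξ,
    pow_add, pow_add]
  linear_combination (-1) ^ M.rk A * (-1) ^ nullity * x ^ nullity * ξ ^ corank * sign_sq

end FinMatroid

/-- Identity 8: the KRSEV identity expressing the rank generating polynomial as a
weighted convolution of characteristic polynomials over cyclic flats.  The dual
`(M|X)⊥` is encoded by ground set `X` with rank function
`A ↦ |A| + rk (X \\ A) - rk X` and rank `|X| - rk X`. -/
theorem rank_generating_dual_char_convolution {α R : Type*} [DecidableEq α] [CommRing R]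
    (M : FinMatroid α) (x ξ : R) :
    (-1 : R) ^ (M.rk M.E) * RG M.E M.rk (M.rk M.E) (-x) (-ξ) =
      ∑ X ∈ M.E.powerset.filter (fun X =>
          (∀ e ∈ M.E \ X, M.rk X < M.rk (insert e X)) ∧
          (∀ e ∈ X, M.rk (X.erase e) = M.rk X)),
        (-1 : R) ^ X.card *
          charPoly X (fun A => A.card + M.rk (X \ A) - M.rk X) (X.card - M.rk X) x *
          charPoly (M.E \ X) (fun A => M.rk (A ∪ X) - M.rk X) (M.rk M.E - M.rk X) ξ := by
  rw [sum_filter_of_ne]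
  · rw [M.neg_one_pow_rk_mul_RG_neg, ← sum_powerset_alternating_convolution]
    refine sum_congr rfl fun X hX => ?_
    replace hX : X ⊆ M.E := mem_powerset.1 hX
    exact congrArg₂ (fun a b => (-1) ^ #X * a * b)
      ((M.restrict hX).charPoly_dual x).symm (M.charPoly_contract hX ξ).symm
  · intro X hX summand_ne_zero
    replace hX : X ⊆ M.E := mem_powerset.1 hX
    refine ⟨fun e he => ?_, fun e he => ?_⟩
    · by_contra! not_flat
      exact summand_ne_zero (mul_eq_zero_of_right _
        (M.charPoly_contract_eq_zero_of_rk_insert_le hX he not_flat _ ξ))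
    · by_contra not_cyclic
      have coloop : M.rk (X.erase e) < M.rk X :=
        (M.rk_mono (erase_subset e X) hX).lt_of_ne not_cyclic
      exact summand_ne_zero (mul_eq_zero_of_left (mul_eq_zero_of_right _
        ((M.restrict hX).charPoly_dual_eq_zero_of_coloop he coloop _ x)) _)
end
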